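/- Let Φ̊ ⊂ ℝⁿ be the root system of type BC_n with n ≥ 3 and let (Λ_α) be an extension datum of type (Φ̊, Y), with common values Λ_s, Λ_ℓ, Λ_d on short, long, divisible roots respectively. Then Λ_ℓ is an additive subgroup of Y, and the following inclusions hold: Λ_ℓ + 2Λ_s ⊆ Λ_ℓ, Λ_s + Λ_ℓ ⊆ Λ_s, Λ_d + 2Λ_ℓ ⊆ Λ_d, Λ_ℓ + Λ_d ⊆ Λ_ℓ, Λ_d + 4Λ_s ⊆ Λ_d, Λ_s + Λ_d ⊆ Λ_s; moreover Λ_d + 2Λ_d = Λ_d. -/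

import Mathlib

open scoped RealInnerProductSpace Pointwise

noncomputable section

namespace BdS

variable {V Y : Type*} [NormedAddCommGroup V] [InnerProductSpace ℝ V]
variable [AddCommGroup Y] [Module ℝ Y]

/-- `pairing β α = (β, α∨) = 2(β,α)/(α,α)`. -/
def pairing (β α : V) : ℝ := 2 * ⟪β, α⟫ / ⟪α, α⟫

/-- `reflRoot α v = s_α(v) = v − (v, α∨)α`. -/
def reflRoot (α v : V) : V := v - pairing v α • α

/-- A (finite) root system in `V`. -/
def IsRootSystem (Φ : Set V) : Prop :=
  Φ.Finite ∧ (0 : V) ∉ Φ ∧ Submodule.span ℝ Φ = ⊤ ∧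
    (∀ α ∈ Φ, ∀ β ∈ Φ, reflRoot α β ∈ Φ) ∧
    ∀ α ∈ Φ, ∀ β ∈ Φ, ∃ m : ℤ, pairing β α = (m : ℝ)

def IsReduced (Φ : Set V) : Prop :=
  ∀ α ∈ Φ, ∀ c : ℝ, c • α ∈ Φ → c • α = α ∨ c • α = -α

def IsIrreducible (Φ : Set V) : Prop :=
  ∀ Φ₁ Φ₂ : Set V, Φ = Φ₁ ∪ Φ₂ → (∀ x ∈ Φ₁, ∀ y ∈ Φ₂, ⟪x, y⟫ = 0) →
    Φ₁ = ∅ ∨ Φ₂ = ∅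

/-- divisible roots -/
def divSet (Φ : Set V) : Set V := {α ∈ Φ | (2:ℝ)⁻¹ • α ∈ Φ}
/-- non-divisible roots -/
def ndSet (Φ : Set V) : Set V := Φ \ divSet Φ
/-- short roots: non-divisible roots of non-maximal squared length -/
def shortSet (Φ : Set V) : Set V := {α ∈ ndSet Φ | ∃ β ∈ ndSet Φ, ⟪α, α⟫ < ⟪β, β⟫}
/-- long roots -/
def longSet (Φ : Set V) : Set V := ndSet Φ \ shortSet Φ

/-- An extension datum of type `(Φ, Y)`. -/
def IsExtensionDatum (Φ : Set V) (Λ : V → Set Y) : Prop :=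
  (∀ α ∈ Φ, ∀ β ∈ Φ, ∀ z ∈ Λ α, ∀ y ∈ Λ β, y - pairing β α • z ∈ Λ (reflRoot α β)) ∧
  (0 : Y) ∈ Λ 0 ∧
  (∀ α ∈ ndSet Φ, (0 : Y) ∈ Λ α) ∧
  (∀ α ∈ divSet Φ, (Λ α).Nonempty) ∧
  Submodule.span ℝ (⋃ α ∈ insert (0 : V) Φ, Λ α) = ⊤

/-- subroot system of a finite root system -/
def IsSubRS (Φ Δ : Set V) : Prop :=
  Δ.Nonempty ∧ Δ ⊆ Φ ∧ ∀ α ∈ Δ, ∀ β ∈ Δ, reflRoot α β ∈ Δ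

def IsClosedSubRS (Φ Δ : Set V) : Prop :=
  IsSubRS Φ Δ ∧ ∀ α ∈ Δ, ∀ β ∈ Δ, α + β ∈ Φ → α + β ∈ Δ

def IsMaxClosedSubRS (Φ Δ : Set V) : Prop :=
  IsClosedSubRS Φ Δ ∧ Δ ≠ Φ ∧
    ∀ Δ' : Set V, IsClosedSubRS Φ Δ' → Δ' ≠ Φ → Δ ⊆ Δ' → Δ' = Δ

/-- semi-closed subroot system, relative to given short/long/divisible parts -/
def IsSemiClosedSubRS (Φ Φs Φl Φd Δ : Set V) : Prop :=
  IsSubRS Φ Δ ∧ ¬ (∀ α ∈ Δ, ∀ β ∈ Δ, α + β ∈ Φ → α + β ∈ Δ) ∧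
    ∀ α ∈ Δ, ∀ β ∈ Δ, α + β ∈ Φ → α + β ∉ Δ →
      (α ∈ Φs ∧ β ∈ Φs ∧ α + β ∈ Φl ∪ Φd) ∨ (α ∈ Φl ∧ β ∈ Φl ∧ α + β ∈ Φd)

def IsMaxSemiClosedSubRS (Φ Φs Φl Φd Δ : Set V) : Prop :=
  IsSemiClosedSubRS Φ Φs Φl Φd Δ ∧
    ∀ Δ' : Set V, IsClosedSubRS Φ Δ' → Δ' ≠ Φ → ¬ Δ ⊂ Δ'

/-- the set of real roots attached to an extension datum -/
def PhiRe (Φ : Set V) (Λ : V → Set Y) : Set (V × Y) := {x | x.1 ∈ Φ ∧ x.2 ∈ Λ x.1}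

/-- affine reflection `s_{α ⊕ y}(β ⊕ z) = s_α(β) ⊕ (z − (β,α∨)y)` -/
def reflAff (a x : V × Y) : V × Y := (reflRoot a.1 x.1, x.2 - pairing x.1 a.1 • a.2)

/-- subroot system of a set of real roots `R` -/
def IsSubSys (R Ψ : Set (V × Y)) : Prop :=
  Ψ.Nonempty ∧ Ψ ⊆ R ∧ Ψ ≠ R ∧ ∀ a ∈ Ψ, ∀ x ∈ Ψ, reflAff a x ∈ Ψ

def IsClosedSubSys (R Ψ : Set (V × Y)) : Prop :=
  IsSubSys R Ψ ∧ ∀ x ∈ Ψ, ∀ y ∈ Ψ, x + y ∈ R → x + y ∈ Ψ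

def IsMaxClosedSubSys (R Ψ : Set (V × Y)) : Prop :=
  IsClosedSubSys R Ψ ∧ ∀ Ψ' : Set (V × Y), IsClosedSubSys R Ψ' → Ψ ⊆ Ψ' → Ψ' = Ψ

/-- gradient of a subroot system -/
def Gr (Ψ : Set (V × Y)) : Set V := {α | ∃ y : Y, (α, y) ∈ Ψ}

def Zset (Ψ : Set (V × Y)) (α : V) : Set Y := {y | (α, y) ∈ Ψ}

abbrev E (n : ℕ) := EuclideanSpace ℝ (Fin n)

def eps {n : ℕ} (i : Fin n) : E n := EuclideanSpace.single i 1

def shortBC (n : ℕ) : Set (E n) := {v | ∃ i : Fin n, v = eps i ∨ v = -eps i}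

def longBC (n : ℕ) : Set (E n) :=
  {v | ∃ i j : Fin n, i ≠ j ∧ ∃ c d : ℝ, (c = 1 ∨ c = -1) ∧ (d = 1 ∨ d = -1) ∧
    v = c • eps i + d • eps j}

def divBC (n : ℕ) : Set (E n) :=
  {v | ∃ i : Fin n, v = (2:ℝ) • eps i ∨ v = -((2:ℝ) • eps i)}

def BCn (n : ℕ) : Set (E n) := shortBC n ∪ longBC n ∪ divBC n
def Bn (n : ℕ) : Set (E n) := shortBC n ∪ longBC n
def Cn (n : ℕ) : Set (E n) := longBC n ∪ divBC n

/-!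
If `(β, α∨) = -k` with `k ∈ ℕ`, then `s_α(β) = β + kα` and the reflection axiom reads
`Λ_β + kΛ_α ⊆ Λ_{β + kα}`. Every inclusion is one instance of this, for a suitable pair of roots,
once the three sets are replaced by the common values of `Λ` on the root lengths containing
`α`, `β` and `β + kα`. Likewise `s_α(α) = -α` gives `-Λ_α ⊆ Λ_{-α}`, and `0 ∈ Λ_ℓ` because the
long roots are non-divisible: all roots of `BC_n` have integral coordinates.
-/

theorem pairing_self {α : V} (hα : α ≠ 0) : pairing α α = 2 :=
  mul_div_cancel_right₀ 2 (inner_self_ne_zero.2 hα)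

section CommonValue

/-- `Λ` takes the common value `A` on the set `S` of roots in `Φ`, as an extension datum does
on each Weyl-group orbit. -/
structure HasCommonValue (Φ : Set V) (Λ : V → Set Y) (S : Set V) (A : Set Y) : Prop where
  subset : S ⊆ Φ
  eq_of_mem : ∀ α ∈ S, Λ α = A

variable {Φ S T R : Set V} {Λ : V → Set Y} {A B C : Set Y} {α β γ : V} {a b : Y}

theorem IsExtensionDatum.add_nsmul_mem (hΛ : IsExtensionDatum Φ Λ)
    (hS : HasCommonValue Φ Λ S A) (hT : HasCommonValue Φ Λ T B) (hR : HasCommonValue Φ Λ R C)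
    (hα : α ∈ S) (hβ : β ∈ T) (hγ : γ ∈ R) {k : ℕ} (hpair : pairing β α = -k)
    (hsum : β + k • α = γ) (hb : b ∈ B) (ha : a ∈ A) : b + k • a ∈ C := by
  rw [← hS.eq_of_mem α hα] at ha
  rw [← hT.eq_of_mem β hβ] at hb
  have hrefl := hΛ.1 α (hS.subset hα) β (hT.subset hβ) a ha b hb
  rwa [reflRoot, hpair, neg_smul, neg_smul, sub_neg_eq_add, sub_neg_eq_add, Nat.cast_smul_eq_nsmul,
    Nat.cast_smul_eq_nsmul, hsum, hR.eq_of_mem γ hγ] at hrefl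

theorem IsExtensionDatum.neg_mem (hΛ : IsExtensionDatum Φ Λ) (hS : HasCommonValue Φ Λ S A)
    (hα : α ∈ S) (hα' : -α ∈ S) (hα₀ : α ≠ 0) (ha : a ∈ A) : -a ∈ A := by
  have haα : a ∈ Λ α := (hS.eq_of_mem α hα).symm ▸ ha
  have hrefl := hΛ.1 α (hS.subset hα) α (hS.subset hα) a haα a haα
  rwa [reflRoot, pairing_self hα₀, two_smul, two_smul, sub_add_cancel_left, sub_add_cancel_left,
    hS.eq_of_mem _ hα'] at hrefl

theorem IsExtensionDatum.zero_mem (hΛ : IsExtensionDatum Φ Λ) (hS : HasCommonValue Φ Λ S A)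
    (hα : α ∈ S) (hnd : α ∈ ndSet Φ) : 0 ∈ A :=
  hS.eq_of_mem α hα ▸ hΛ.2.2.1 α hnd

end CommonValue

section Roots

variable {n : ℕ} {i j : Fin n}

theorem eps_apply (i k : Fin n) : (eps i : E n) k = if k = i then 1 else 0 := by
  simp [eps]

theorem inner_eps_right (v : E n) (i : Fin n) : ⟪v, eps i⟫ = v i := by
  simp [eps, EuclideanSpace.inner_single_right]

theorem pairing_eps (v : E n) (i : Fin n) : pairing v (eps i) = 2 * v i := by
  simp only [pairing, inner_eps_right, eps_apply, if_true, div_one]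

theorem pairing_two_smul_eps (v : E n) (i : Fin n) : pairing v ((2 : ℝ) • eps i) = v i := by
  simp only [pairing, real_inner_smul_right, inner_eps_right, PiLp.smul_apply, smul_eq_mul,
    eps_apply, if_true]
  ring

theorem pairing_eps_sub_eps (v : E n) (hij : i ≠ j) :
    pairing v (eps i - eps j) = v i - v j := by
  simp only [pairing, inner_sub_right, inner_eps_right, PiLp.sub_apply, eps_apply, hij, hij.symm,
    if_true, if_false]
  ring

theorem eps_mem_shortBC (i : Fin n) : eps i ∈ shortBC n := ⟨i, Or.inl rfl⟩

theorem neg_eps_mem_shortBC (i : Fin n) : -eps i ∈ shortBC n := ⟨i, Or.inr rfl⟩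

theorem two_smul_eps_mem_divBC (i : Fin n) : (2 : ℝ) • eps i ∈ divBC n := ⟨i, Or.inl rfl⟩

theorem neg_two_smul_eps_mem_divBC (i : Fin n) : -((2 : ℝ) • eps i) ∈ divBC n := ⟨i, Or.inr rfl⟩

theorem eps_add_eps_mem_longBC (hij : i ≠ j) : eps i + eps j ∈ longBC n :=
  ⟨i, j, hij, 1, 1, Or.inl rfl, Or.inl rfl, by module⟩

theorem eps_sub_eps_mem_longBC (hij : i ≠ j) : eps i - eps j ∈ longBC n :=
  ⟨i, j, hij, 1, -1, Or.inl rfl, Or.inr rfl, by module⟩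

theorem eps_ne_zero (i : Fin n) : (eps i : E n) ≠ 0 := fun h => by
  simpa [eps_apply] using congrArg (fun v : E n => v i) h

theorem eps_sub_eps_ne_zero (hij : i ≠ j) : (eps i - eps j : E n) ≠ 0 := fun h => by
  simpa [eps_apply, hij] using congrArg (fun v : E n => v i) h

theorem apply_mem_range_intCast_of_mem_BCn {v : E n} (hv : v ∈ BCn n) (k : Fin n) :
    v k ∈ (Int.castAddHom ℝ).range := by
  have heps (i : Fin n) : eps i k ∈ (Int.castAddHom ℝ).range :=
    ⟨if k = i then 1 else 0, by simp [eps_apply]⟩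
  have hsign {c : ℝ} (hc : c = 1 ∨ c = -1) (i : Fin n) :
      c * eps i k ∈ (Int.castAddHom ℝ).range := by
    rcases hc with rfl | rfl <;> simpa using heps i
  have htwo (i : Fin n) : 2 * eps i k ∈ (Int.castAddHom ℝ).range :=
    two_mul (eps i k) ▸ add_mem (heps i) (heps i)
  rcases hv with (⟨i, rfl | rfl⟩ | ⟨i, j, -, c, d, hc, hd, rfl⟩) | ⟨i, rfl | rfl⟩
  · exact heps i
  · exact neg_mem (heps i)
  · exact add_mem (hsign hc i) (hsign hd j)
  · exact htwo i
  · exact neg_mem (htwo i)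

theorem eps_sub_eps_mem_ndSet_BCn (hij : i ≠ j) : eps i - eps j ∈ ndSet (BCn n) := by
  refine ⟨Or.inl (Or.inr (eps_sub_eps_mem_longBC hij)), fun hdiv => ?_⟩
  obtain ⟨m, hm⟩ := apply_mem_range_intCast_of_mem_BCn hdiv.2 i
  have hhalf : (m : ℝ) = 2⁻¹ := by simpa [eps_apply, hij] using hm
  have hodd : ((2 * m : ℤ) : ℝ) = 1 := by rw [Int.cast_mul, hhalf]; norm_num
  norm_cast at hodd
  omega

end Roots

section Values

variable {n : ℕ} {i j k : Fin n} {Φ : Set (E n)} {Λ : E n → Set Y} {Λs Λl Λd : Set Y} {a b : Y}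

theorem IsExtensionDatum.long_add_long_mem (hΛ : IsExtensionDatum Φ Λ)
    (hl : HasCommonValue Φ Λ (longBC n) Λl) (hij : i ≠ j) (hik : i ≠ k) (hjk : j ≠ k)
    (ha : a ∈ Λl) (hb : b ∈ Λl) : a + b ∈ Λl := by
  simpa only [one_nsmul] using
    hΛ.add_nsmul_mem hl hl hl (eps_sub_eps_mem_longBC hjk) (eps_sub_eps_mem_longBC hij)
      (eps_sub_eps_mem_longBC hik) (k := 1)
      (by simp [pairing_eps_sub_eps _ hjk, eps_apply, hij.symm, hik.symm, hjk.symm])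
      (by module) ha hb

theorem IsExtensionDatum.neg_mem_long (hΛ : IsExtensionDatum Φ Λ)
    (hl : HasCommonValue Φ Λ (longBC n) Λl) (hij : i ≠ j) (ha : a ∈ Λl) : -a ∈ Λl :=
  hΛ.neg_mem hl (eps_sub_eps_mem_longBC hij)
    ((neg_sub (eps i) (eps j)).symm ▸ eps_sub_eps_mem_longBC hij.symm) (eps_sub_eps_ne_zero hij) ha

theorem IsExtensionDatum.long_add_two_nsmul_short_mem (hΛ : IsExtensionDatum Φ Λ)
    (hl : HasCommonValue Φ Λ (longBC n) Λl) (hs : HasCommonValue Φ Λ (shortBC n) Λs)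
    (hij : i ≠ j) (ha : a ∈ Λl) (hb : b ∈ Λs) : a + 2 • b ∈ Λl :=
  hΛ.add_nsmul_mem hs hl hl (eps_mem_shortBC j) (eps_sub_eps_mem_longBC hij)
    (eps_add_eps_mem_longBC hij) (by simp [pairing_eps, eps_apply, hij.symm]) (by module) ha hb

theorem IsExtensionDatum.short_add_long_mem (hΛ : IsExtensionDatum Φ Λ)
    (hs : HasCommonValue Φ Λ (shortBC n) Λs) (hl : HasCommonValue Φ Λ (longBC n) Λl)
    (hij : i ≠ j) (ha : a ∈ Λs) (hb : b ∈ Λl) : a + b ∈ Λs := by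
  simpa only [one_nsmul] using
    hΛ.add_nsmul_mem hl hs hs (eps_sub_eps_mem_longBC hij) (eps_mem_shortBC j) (eps_mem_shortBC i)
      (k := 1) (by simp [pairing_eps_sub_eps _ hij, eps_apply, hij]) (by module) ha hb

theorem IsExtensionDatum.div_add_two_nsmul_long_mem (hΛ : IsExtensionDatum Φ Λ)
    (hd : HasCommonValue Φ Λ (divBC n) Λd) (hl : HasCommonValue Φ Λ (longBC n) Λl)
    (hij : i ≠ j) (ha : a ∈ Λd) (hb : b ∈ Λl) : a + 2 • b ∈ Λd :=
  hΛ.add_nsmul_mem hl hd hd (eps_sub_eps_mem_longBC hij) (two_smul_eps_mem_divBC j)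
    (two_smul_eps_mem_divBC i) (by simp [pairing_eps_sub_eps _ hij, eps_apply, hij]) (by module)
    ha hb

theorem IsExtensionDatum.long_add_div_mem (hΛ : IsExtensionDatum Φ Λ)
    (hl : HasCommonValue Φ Λ (longBC n) Λl) (hd : HasCommonValue Φ Λ (divBC n) Λd)
    (hij : i ≠ j) (ha : a ∈ Λl) (hb : b ∈ Λd) : a + b ∈ Λl := by
  simpa only [one_nsmul] using
    hΛ.add_nsmul_mem hd hl hl (two_smul_eps_mem_divBC j) (eps_sub_eps_mem_longBC hij)
      (eps_add_eps_mem_longBC hij) (k := 1)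
      (by simp [pairing_two_smul_eps, eps_apply, hij.symm]) (by module) ha hb

theorem IsExtensionDatum.div_add_four_nsmul_short_mem (hΛ : IsExtensionDatum Φ Λ)
    (hd : HasCommonValue Φ Λ (divBC n) Λd) (hs : HasCommonValue Φ Λ (shortBC n) Λs)
    (i : Fin n) (ha : a ∈ Λd) (hb : b ∈ Λs) : a + 4 • b ∈ Λd :=
  hΛ.add_nsmul_mem hs hd hd (eps_mem_shortBC i) (neg_two_smul_eps_mem_divBC i)
    (two_smul_eps_mem_divBC i) (by norm_num [pairing_eps, eps_apply]) (by module) ha hb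

theorem IsExtensionDatum.short_add_div_mem (hΛ : IsExtensionDatum Φ Λ)
    (hs : HasCommonValue Φ Λ (shortBC n) Λs) (hd : HasCommonValue Φ Λ (divBC n) Λd)
    (i : Fin n) (ha : a ∈ Λs) (hb : b ∈ Λd) : a + b ∈ Λs := by
  simpa only [one_nsmul] using
    hΛ.add_nsmul_mem hd hs hs (two_smul_eps_mem_divBC i) (neg_eps_mem_shortBC i)
      (eps_mem_shortBC i) (k := 1) (by simp [pairing_two_smul_eps, eps_apply]) (by module) ha hb

theorem IsExtensionDatum.neg_mem_div (hΛ : IsExtensionDatum Φ Λ)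
    (hd : HasCommonValue Φ Λ (divBC n) Λd) (i : Fin n) (ha : a ∈ Λd) : -a ∈ Λd :=
  hΛ.neg_mem hd (two_smul_eps_mem_divBC i) (neg_two_smul_eps_mem_divBC i)
    (smul_ne_zero two_ne_zero (eps_ne_zero i)) ha

theorem IsExtensionDatum.div_add_two_nsmul_div_mem (hΛ : IsExtensionDatum Φ Λ)
    (hd : HasCommonValue Φ Λ (divBC n) Λd) (i : Fin n) (ha : a ∈ Λd) (hb : b ∈ Λd) :
    a + 2 • b ∈ Λd :=
  hΛ.add_nsmul_mem hd hd hd (two_smul_eps_mem_divBC i) (neg_two_smul_eps_mem_divBC i)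
    (two_smul_eps_mem_divBC i) (by simp [pairing_two_smul_eps, eps_apply]) (by module) ha hb

end Values

theorem statement3_general {Y : Type*} [AddCommGroup Y] [Module ℝ Y]
    {n : ℕ} (hn : 3 ≤ n) (Λ : E n → Set Y) (Λs Λl Λd : Set Y)
    (hED : IsExtensionDatum (BCn n) Λ)
    (hs : ∀ α ∈ shortBC n, Λ α = Λs) (hl : ∀ α ∈ longBC n, Λ α = Λl)
    (hd : ∀ α ∈ divBC n, Λ α = Λd) :
    (∃ G : AddSubgroup Y, Λl = (G : Set Y)) ∧
    (∀ a ∈ Λl, ∀ b ∈ Λs, a + b + b ∈ Λl) ∧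
    (∀ a ∈ Λs, ∀ b ∈ Λl, a + b ∈ Λs) ∧
    (∀ a ∈ Λd, ∀ b ∈ Λl, a + b + b ∈ Λd) ∧
    (∀ a ∈ Λl, ∀ b ∈ Λd, a + b ∈ Λl) ∧
    (∀ a ∈ Λd, ∀ b ∈ Λs, a + b + b + b + b ∈ Λd) ∧
    (∀ a ∈ Λs, ∀ b ∈ Λd, a + b ∈ Λs) ∧
    {x : Y | ∃ a ∈ Λd, ∃ b ∈ Λd, x = a + b + b} = Λd := by
  obtain ⟨i, j, k, hij, hik, hjk⟩ : ∃ i j k : Fin n, i ≠ j ∧ i ≠ k ∧ j ≠ k :=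
    Fintype.two_lt_card_iff.1 ((Fintype.card_fin n).symm ▸ hn)
  have hs : HasCommonValue (BCn n) Λ (shortBC n) Λs := ⟨fun _ h => Or.inl (Or.inl h), hs⟩
  have hl : HasCommonValue (BCn n) Λ (longBC n) Λl := ⟨fun _ h => Or.inl (Or.inr h), hl⟩
  have hd : HasCommonValue (BCn n) Λ (divBC n) Λd := ⟨fun _ h => Or.inr h, hd⟩
  have add_two (a b : Y) : a + b + b = a + 2 • b := by abel
  have add_four (a b : Y) : a + b + b + b + b = a + 4 • b := by abel
  simp only [add_four]
  simp only [add_two]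
  refine ⟨⟨{ carrier := Λl
             zero_mem' := hED.zero_mem hl (eps_sub_eps_mem_longBC hij)
               (eps_sub_eps_mem_ndSet_BCn hij)
             add_mem' := hED.long_add_long_mem hl hij hik hjk
             neg_mem' := hED.neg_mem_long hl hij }, rfl⟩,
    fun _ ha _ hb => hED.long_add_two_nsmul_short_mem hl hs hij ha hb,
    fun _ ha _ hb => hED.short_add_long_mem hs hl hij ha hb,
    fun _ ha _ hb => hED.div_add_two_nsmul_long_mem hd hl hij ha hb,
    fun _ ha _ hb => hED.long_add_div_mem hl hd hij ha hb,
    fun _ ha _ hb => hED.div_add_four_nsmul_short_mem hd hs i ha hb,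
    fun _ ha _ hb => hED.short_add_div_mem hs hd i ha hb,
    Set.Subset.antisymm ?_ fun x hx => ⟨-x, hED.neg_mem_div hd i hx, x, hx, by abel⟩⟩
  rintro _ ⟨a, ha, b, hb, rfl⟩
  exact hED.div_add_two_nsmul_div_mem hd i ha hb

/-- Lemma 2.10(iv) for type `BC_n`, `n ≥ 3`. -/
theorem statement3 {Y : Type*} [AddCommGroup Y] [Module ℝ Y] [FiniteDimensional ℝ Y]
    {n : ℕ} (hn : 3 ≤ n) (Λ : E n → Set Y) (Λs Λl Λd : Set Y)
    (hED : IsExtensionDatum (BCn n) Λ)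
    (hs : ∀ α ∈ shortBC n, Λ α = Λs) (hl : ∀ α ∈ longBC n, Λ α = Λl)
    (hd : ∀ α ∈ divBC n, Λ α = Λd) :
    (∃ G : AddSubgroup Y, Λl = (G : Set Y)) ∧
    (∀ a ∈ Λl, ∀ b ∈ Λs, a + b + b ∈ Λl) ∧
    (∀ a ∈ Λs, ∀ b ∈ Λl, a + b ∈ Λs) ∧
    (∀ a ∈ Λd, ∀ b ∈ Λl, a + b + b ∈ Λd) ∧
    (∀ a ∈ Λl, ∀ b ∈ Λd, a + b ∈ Λl) ∧
    (∀ a ∈ Λd, ∀ b ∈ Λs, a + b + b + b + b ∈ Λd) ∧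
    (∀ a ∈ Λs, ∀ b ∈ Λd, a + b ∈ Λs) ∧
    {x : Y | ∃ a ∈ Λd, ∃ b ∈ Λd, x = a + b + b} = Λd :=
  statement3_general hn Λ Λs Λl Λd hED hs hl hd

end BdS
end
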